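/- Let m ≥ 1 and 0 ≤ s < 2m. If s is even, then the ℂ-linear span of {W_m(n) : 2^s ≤ n < 2^{s+1}} equals the set of matrices of the form A ⊗ r^{(1,0)} ⊗ I, where A ranges over all 2^{s/2} × 2^{s/2} complex matrices and I is the identity matrix of size 2^{m − s/2 − 1}. If s is odd, then this span equals the set of matrices of the form A ⊗ r^{(0,1)} ⊗ I + B ⊗ r^{(1,1)} ⊗ I, where A, B range over all 2^{(s−1)/2} × 2^{(s−1)/2} complex matrices and I is the identity matrix of size 2^{m − (s+1)/2}. -/

import Mathlib

open Matrix

/-- The four 2×2 Rademacher matrices `r^{(γ₀,γ₁)}`, indexed by the two bits. -/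
noncomputable def radMat : Bool → Bool → Matrix (Fin 2) (Fin 2) ℂ
  | false, false => !![1, 0; 0, 1]
  | true,  false => !![1, 0; 0, -1]
  | false, true  => !![0, 1; 1, 0]
  | true,  true  => !![0, 1; -1, 0]

/-- The Walsh matrix `W_m(n) = r^{(γ₀,γ₁)} ⊗ r^{(γ₂,γ₃)} ⊗ ⋯ ⊗ r^{(γ_{2m-2},γ_{2m-1})}`
as a `2^m × 2^m` complex matrix, where `γ_i` are the binary digits of `n`. -/
noncomputable def walshMatrix : (m : ℕ) → ℕ → Matrix (Fin (2 ^ m)) (Fin (2 ^ m)) ℂ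
  | 0, _ => 1
  | m + 1, n =>
    Matrix.reindex
      ((finProdFinEquiv (m := 2) (n := 2 ^ m)).trans (finCongr (by ring)))
      ((finProdFinEquiv (m := 2) (n := 2 ^ m)).trans (finCongr (by ring)))
      (Matrix.kroneckerMap (· * ·) (radMat (n.testBit 0) (n.testBit 1)) (walshMatrix m (n / 4)))

/-- The triple Kronecker product `A ⊗ B ⊗ C`, reindexed as a square matrix of size `d = a*(b*c)`. -/
noncomputable def kron3 {a b c d : ℕ} (h : a * (b * c) = d)
    (A : Matrix (Fin a) (Fin a) ℂ) (B : Matrix (Fin b) (Fin b) ℂ)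
    (C : Matrix (Fin c) (Fin c) ℂ) : Matrix (Fin d) (Fin d) ℂ :=
  Matrix.reindex
    ((((Equiv.refl (Fin a)).prodCongr finProdFinEquiv).trans finProdFinEquiv).trans (finCongr h))
    ((((Equiv.refl (Fin a)).prodCongr finProdFinEquiv).trans finProdFinEquiv).trans (finCongr h))
    (Matrix.kroneckerMap (· * ·) A (Matrix.kroneckerMap (· * ·) B C))

lemma walsh_size_eq (m s : ℕ) (hm : 1 ≤ m) (hs : s < 2 * m) :
    2 ^ (s / 2) * (2 * 2 ^ (m - s / 2 - 1)) = 2 ^ m := by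
  have h : s / 2 + (m - s / 2 - 1 + 1) = m := by omega
  calc 2 ^ (s / 2) * (2 * 2 ^ (m - s / 2 - 1))
      = 2 ^ (s / 2) * 2 ^ (m - s / 2 - 1 + 1) := by rw [pow_succ]; ring
    _ = 2 ^ m := by rw [← pow_add, h]

/-!
The matrix `W_{k+l}(n)` is `W_k(n) ⊗ W_l(n / 4^k)`, in which `W_k(n)` depends only on `n % 4^k`,
so the two factors vary independently. Since all the `W_k(n)` together span the full matrix
algebra, the matrices `W_{k+l}(n)` with `n / 4^k ∈ S` span the tensor product of that algebra with
the span of `W_l(S)`. For `k = s / 2`, the shell `2^s ≤ n < 2^(s+1)` is the condition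
`n / 4^k = 1` if `s` is even and `n / 4^k ∈ {2, 3}` if `s` is odd.
-/

section FinKron

variable {R : Type*} [CommSemiring R] {a b c d e f : ℕ}

/-- The lexicographic identification of `Fin a × Fin b` with `Fin c` for `a * b = c`, by which the
Kronecker product of matrices indexed by `Fin a` and `Fin b` is indexed by `Fin c`. The product size
is a variable so that, for example, `2 * 2 ^ m` can be replaced by `2 ^ (m + 1)`. -/
def finProdEquivOfEq (h : a * b = c) : Fin a × Fin b ≃ Fin c :=
  finProdFinEquiv.trans (finCongr h)

lemma finProdEquivOfEq_assoc (hbc : b * c = e) (ha : a * e = d) (hab : a * b = f) (hc : f * c = d)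
    (i : Fin a) (j : Fin b) (k : Fin c) :
    finProdEquivOfEq ha (i, finProdEquivOfEq hbc (j, k)) =
      finProdEquivOfEq hc (finProdEquivOfEq hab (i, j), k) := by
  subst hbc
  ext
  simp only [finProdEquivOfEq, Equiv.trans_apply, finProdFinEquiv_apply_val, finCongr_apply,
    Fin.val_cast]
  ring

/-- The Kronecker product of square matrices as a bilinear map, with the rows and columns of the
product indexed by `Fin c` through `finProdEquivOfEq`. -/
def finKron (h : a * b = c) :
    Matrix (Fin a) (Fin a) R →ₗ[R] Matrix (Fin b) (Fin b) R →ₗ[R] Matrix (Fin c) (Fin c) R :=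
  kroneckerBilinear.compr₂
    (reindexLinearEquiv R R (finProdEquivOfEq h) (finProdEquivOfEq h)).toLinearMap

lemma finKron_apply_apply (h : a * b = c) (A : Matrix (Fin a) (Fin a) R)
    (B : Matrix (Fin b) (Fin b) R) (p q : Fin a × Fin b) :
    finKron h A B (finProdEquivOfEq h p) (finProdEquivOfEq h q) = A p.1 q.1 * B p.2 q.2 := by
  simp [finKron, kroneckerBilinear]

lemma finKron_assoc (hbc : b * c = e) (ha : a * e = d) (hab : a * b = f) (hc : f * c = d)
    (A : Matrix (Fin a) (Fin a) R) (B : Matrix (Fin b) (Fin b) R) (C : Matrix (Fin c) (Fin c) R) :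
    finKron ha A (finKron hbc B C) = finKron hc (finKron hab A B) C := by
  ext p q
  obtain ⟨⟨⟨i, j⟩, k⟩, rfl⟩ :=
    (((finProdEquivOfEq hab).prodCongr (.refl _)).trans (finProdEquivOfEq hc)).surjective p
  obtain ⟨⟨⟨i', j'⟩, k'⟩, rfl⟩ :=
    (((finProdEquivOfEq hab).prodCongr (.refl _)).trans (finProdEquivOfEq hc)).surjective q
  simp only [Equiv.trans_apply, Equiv.prodCongr_apply, Prod.map_apply, Equiv.refl_apply,
    finKron_apply_apply]
  simp only [← finProdEquivOfEq_assoc hbc ha, finKron_apply_apply, mul_assoc]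

lemma finKron_one_one (h : a * b = c) :
    finKron h (1 : Matrix (Fin a) (Fin a) R) (1 : Matrix (Fin b) (Fin b) R) = 1 := by
  simp [finKron, kroneckerBilinear]

lemma finKron_one_left (h : 1 * b = b) (B : Matrix (Fin b) (Fin b) R) :
    finKron h (1 : Matrix (Fin 1) (Fin 1) R) B = B := by
  have index_eq (i : Fin b) : finProdEquivOfEq h (0, i) = i := by
    ext; simp [finProdEquivOfEq]
  ext i j
  simpa [index_eq] using finKron_apply_apply h (1 : Matrix (Fin 1) (Fin 1) R) B (0, i) (0, j)

lemma map₂_finKron_top_top (h : a * b = c) :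
    Submodule.map₂ (finKron (R := R) h) ⊤ ⊤ = ⊤ := by
  let toProduct := (kroneckerLinearEquiv (Fin a) (Fin a) (Fin b) (Fin b) R).trans
    (reindexLinearEquiv R R (finProdEquivOfEq h) (finProdEquivOfEq h))
  have factor : finKron (R := R) h = (TensorProduct.mk R _ _).compr₂ toProduct.toLinearMap := rfl
  rw [factor, ← Submodule.map_map₂, TensorProduct.map₂_mk_top_top_eq_top, Submodule.map_top,
    LinearEquiv.range]

end FinKron

lemma kron3_eq_finKron {a b c d e : ℕ} (h : a * (b * c) = d) (hbc : b * c = e) (ha : a * e = d)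
    (A : Matrix (Fin a) (Fin a) ℂ) (B : Matrix (Fin b) (Fin b) ℂ) (C : Matrix (Fin c) (Fin c) ℂ) :
    kron3 h A B C = finKron ha A (finKron hbc B C) := by
  subst hbc
  rfl

lemma radMat_false_false : radMat false false = 1 :=
  one_fin_two.symm

lemma span_range_radMat : Submodule.span ℂ (Set.range (Function.uncurry radMat)) = ⊤ := by
  refine eq_top_iff.2 fun M _ ↦ (Submodule.mem_span_range_iff_exists_fun ℂ).2 ⟨fun
    | (false, false) => (M 0 0 + M 1 1) / 2
    | (true, false) => (M 0 0 - M 1 1) / 2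
    | (false, true) => (M 0 1 + M 1 0) / 2
    | (true, true) => (M 0 1 - M 1 0) / 2, ?_⟩
  ext i j
  fin_cases i <;> fin_cases j <;> simp [Fintype.sum_prod_type, radMat] <;> ring

lemma preimage_div_four_pow_Ico (s : ℕ) :
    (· / 4 ^ (s / 2)) ⁻¹' Set.Ico (2 ^ (s % 2)) (2 ^ (s % 2 + 1)) =
      Set.Ico (2 ^ s) (2 ^ (s + 1)) := by
  have two_pow_add (r : ℕ) : 2 ^ (r + 2 * (s / 2)) = 2 ^ r * 4 ^ (s / 2) := by
    rw [pow_add, pow_mul]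
    rfl
  have shell_start : 2 ^ s = 2 ^ (s % 2) * 4 ^ (s / 2) := by
    rw [← two_pow_add, Nat.mod_add_div]
  have shell_end : 2 ^ (s + 1) = 2 ^ (s % 2 + 1) * 4 ^ (s / 2) := by
    rw [← two_pow_add, add_right_comm, Nat.mod_add_div]
  ext n
  rw [Set.mem_preimage, Set.mem_Ico, Set.mem_Ico, Nat.le_div_iff_mul_le (by positivity),
    Nat.div_lt_iff_lt_mul (by positivity), shell_start, shell_end]

section WalshMatrix

variable {k l m : ℕ}

lemma walshMatrix_succ (m n : ℕ) :
    walshMatrix (m + 1) n = finKron (pow_succ' 2 m).symm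
      (radMat (n.testBit 0) (n.testBit 1)) (walshMatrix m (n / 4)) :=
  rfl

lemma walshMatrix_zero_right (m : ℕ) : walshMatrix m 0 = 1 := by
  induction m with
  | zero => rfl
  | succ m ih =>
    rw [walshMatrix_succ, Nat.zero_div, ih, Nat.zero_testBit, Nat.zero_testBit,
      radMat_false_false, finKron_one_one]

lemma walshMatrix_succ_of_lt_four (m : ℕ) {n : ℕ} (hn : n < 4) :
    walshMatrix (m + 1) n =
      finKron (pow_succ' 2 m).symm (radMat (n.testBit 0) (n.testBit 1)) 1 := by
  rw [walshMatrix_succ, Nat.div_eq_of_lt hn, walshMatrix_zero_right]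

lemma walshMatrix_succ_one (m : ℕ) :
    walshMatrix (m + 1) 1 = finKron (pow_succ' 2 m).symm (radMat true false) 1 :=
  walshMatrix_succ_of_lt_four m (by decide)

lemma walshMatrix_succ_two (m : ℕ) :
    walshMatrix (m + 1) 2 = finKron (pow_succ' 2 m).symm (radMat false true) 1 :=
  walshMatrix_succ_of_lt_four m (by decide)

lemma walshMatrix_succ_three (m : ℕ) :
    walshMatrix (m + 1) 3 = finKron (pow_succ' 2 m).symm (radMat true true) 1 :=
  walshMatrix_succ_of_lt_four m (by decide)

lemma walshMatrix_mod_four_pow (m n : ℕ) : walshMatrix m (n % 4 ^ m) = walshMatrix m n := by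
  induction m generalizing n with
  | zero => rfl
  | succ m ih =>
    have testBit_eq {i : ℕ} (hi : i < 2) : (n % 4 ^ (m + 1)).testBit i = n.testBit i := by
      have four_pow : 4 ^ (m + 1) = 2 ^ (2 * (m + 1)) := by rw [pow_mul]; rfl
      have i_lt : i < 2 * (m + 1) := by lia
      rw [four_pow, Nat.testBit_mod_two_pow, decide_eq_true i_lt, Bool.true_and]
    have div_eq : n % 4 ^ (m + 1) / 4 = n / 4 % 4 ^ m := by
      rw [pow_succ', Nat.mod_mul_right_div_self]
    rw [walshMatrix_succ, testBit_eq two_pos, testBit_eq one_lt_two, div_eq, ih, ← walshMatrix_succ]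

lemma walshMatrix_eq_finKron (h : 2 ^ k * 2 ^ l = 2 ^ m) (n : ℕ) :
    walshMatrix m n = finKron h (walshMatrix k n) (walshMatrix l (n / 4 ^ k)) := by
  have size_add : k + l = m := Nat.pow_right_injective le_rfl ((pow_add 2 k l).trans h)
  induction k generalizing m n with
  | zero =>
    obtain rfl : l = m := by lia
    have div_eq : n / 4 ^ 0 = n := by rw [pow_zero, Nat.div_one]
    rw [div_eq]
    exact (finKron_one_left _ _).symm
  | succ k ih =>
    obtain rfl : k + l + 1 = m := by lia
    rw [walshMatrix_succ, ih (pow_add 2 k l).symm _ rfl, Nat.div_div_eq_div_mul, ← pow_succ' 4 k,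
      walshMatrix_succ k]
    exact finKron_assoc ..

lemma image_walshMatrix_preimage (h : 2 ^ k * 2 ^ l = 2 ^ m) (S : Set ℕ) :
    walshMatrix m '' ((· / 4 ^ k) ⁻¹' S) =
      Set.image2 (fun A B ↦ finKron h A B) (Set.range (walshMatrix k)) (walshMatrix l '' S) := by
  ext M
  constructor
  · rintro ⟨n, hn, rfl⟩
    exact ⟨_, ⟨n, rfl⟩, _, ⟨_, hn, rfl⟩, (walshMatrix_eq_finKron h n).symm⟩
  · rintro ⟨_, ⟨n, rfl⟩, _, ⟨b, hb, rfl⟩, rfl⟩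
    have div_eq : (n % 4 ^ k + 4 ^ k * b) / 4 ^ k = b := by
      rw [Nat.add_mul_div_left _ _ (by positivity), Nat.div_eq_of_lt (Nat.mod_lt _ (by positivity)),
        zero_add]
    have walsh_eq : walshMatrix k (n % 4 ^ k + 4 ^ k * b) = walshMatrix k n := by
      rw [← walshMatrix_mod_four_pow, Nat.add_mul_mod_self_left, Nat.mod_mod,
        walshMatrix_mod_four_pow]
    refine ⟨n % 4 ^ k + 4 ^ k * b, by simpa only [Set.mem_preimage, div_eq] using hb, ?_⟩
    rw [walshMatrix_eq_finKron h, div_eq, walsh_eq]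

lemma range_walshMatrix_succ (m : ℕ) :
    Set.range (walshMatrix (m + 1)) =
      Set.image2 (fun A B ↦ finKron (pow_succ' 2 m).symm A B)
        (Set.range (Function.uncurry radMat)) (Set.range (walshMatrix m)) := by
  ext M
  constructor
  · rintro ⟨n, rfl⟩
    exact ⟨_, ⟨(n.testBit 0, n.testBit 1), rfl⟩, _, ⟨n / 4, rfl⟩, rfl⟩
  · rintro ⟨_, ⟨⟨b₀, b₁⟩, rfl⟩, _, ⟨n, rfl⟩, rfl⟩
    have div_four : Nat.bit b₀ (Nat.bit b₁ n) / 4 = n := by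
      rw [← Nat.div_div_eq_div_mul _ 2 2, Nat.bit_div_two, Nat.bit_div_two]
    refine ⟨Nat.bit b₀ (Nat.bit b₁ n), ?_⟩
    rw [walshMatrix_succ, Nat.testBit_bit_zero, Nat.testBit_bit_succ, Nat.testBit_bit_zero,
      div_four, Function.uncurry_apply_pair]

lemma span_range_walshMatrix (m : ℕ) : Submodule.span ℂ (Set.range (walshMatrix m)) = ⊤ := by
  induction m with
  | zero =>
    refine eq_top_iff.2 fun M _ ↦ ?_
    have scalar : M 0 0 • walshMatrix 0 0 = M := by
      ext i j
      obtain rfl : i = 0 := Subsingleton.elim (α := Fin 1) i 0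
      obtain rfl : j = 0 := Subsingleton.elim (α := Fin 1) j 0
      simp [walshMatrix_zero_right]
    exact scalar ▸ Submodule.smul_mem _ _ (Submodule.subset_span ⟨0, rfl⟩)
  | succ m ih =>
    rw [range_walshMatrix_succ, ← Submodule.map₂_span_span, span_range_radMat, ih,
      map₂_finKron_top_top]

lemma span_image_walshMatrix_preimage (h : 2 ^ k * 2 ^ l = 2 ^ m) (S : Set ℕ) :
    Submodule.span ℂ (walshMatrix m '' ((· / 4 ^ k) ⁻¹' S)) =
      Submodule.map₂ (finKron h) ⊤ (Submodule.span ℂ (walshMatrix l '' S)) := by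
  rw [image_walshMatrix_preimage h, ← Submodule.map₂_span_span, span_range_walshMatrix]

lemma span_walshMatrix_shell (s : ℕ) (h : 2 ^ (s / 2) * 2 ^ l = 2 ^ m) :
    Submodule.span ℂ {M | ∃ n, 2 ^ s ≤ n ∧ n < 2 ^ (s + 1) ∧ M = walshMatrix m n} =
      Submodule.map₂ (finKron h) ⊤
        (Submodule.span ℂ (walshMatrix l '' Set.Ico (2 ^ (s % 2)) (2 ^ (s % 2 + 1)))) := by
  rw [← span_image_walshMatrix_preimage h, preimage_div_four_pow_Ico]
  congr 1
  ext M
  simp only [Set.mem_image, Set.mem_Ico, Set.mem_ofPred_eq, and_assoc, eq_comm]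

end WalshMatrix

theorem walsh_span_shell (m s : ℕ) (hm : 1 ≤ m) (hs : s < 2 * m) :
    (s % 2 = 0 →
      (Submodule.span ℂ {M : Matrix (Fin (2 ^ m)) (Fin (2 ^ m)) ℂ |
          ∃ n : ℕ, 2 ^ s ≤ n ∧ n < 2 ^ (s + 1) ∧ M = walshMatrix m n} :
        Set (Matrix (Fin (2 ^ m)) (Fin (2 ^ m)) ℂ)) =
      {M | ∃ A : Matrix (Fin (2 ^ (s / 2))) (Fin (2 ^ (s / 2))) ℂ,
          M = kron3 (walsh_size_eq m s hm hs) A (radMat true false)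
                (1 : Matrix (Fin (2 ^ (m - s / 2 - 1))) (Fin (2 ^ (m - s / 2 - 1))) ℂ)}) ∧
    (s % 2 = 1 →
      (Submodule.span ℂ {M : Matrix (Fin (2 ^ m)) (Fin (2 ^ m)) ℂ |
          ∃ n : ℕ, 2 ^ s ≤ n ∧ n < 2 ^ (s + 1) ∧ M = walshMatrix m n} :
        Set (Matrix (Fin (2 ^ m)) (Fin (2 ^ m)) ℂ)) =
      {M | ∃ A B : Matrix (Fin (2 ^ (s / 2))) (Fin (2 ^ (s / 2))) ℂ,
          M = kron3 (walsh_size_eq m s hm hs) A (radMat false true)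
                (1 : Matrix (Fin (2 ^ (m - s / 2 - 1))) (Fin (2 ^ (m - s / 2 - 1))) ℂ)
            + kron3 (walsh_size_eq m s hm hs) B (radMat true true)
                (1 : Matrix (Fin (2 ^ (m - s / 2 - 1))) (Fin (2 ^ (m - s / 2 - 1))) ℂ)}) := by
  have size_add : s / 2 + (m - s / 2 - 1 + 1) = m := by lia
  have size_mul : 2 ^ (s / 2) * 2 ^ (m - s / 2 - 1 + 1) = 2 ^ m := by rw [← pow_add, size_add]
  rw [span_walshMatrix_shell s size_mul]
  simp only [kron3_eq_finKron _ (pow_succ' 2 _).symm size_mul]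
  constructor
  · intro s_even
    have leading_digit : Set.Ico (2 ^ (s % 2)) (2 ^ (s % 2 + 1)) = {1} := by
      ext; simp only [s_even, Set.mem_Ico, Set.mem_singleton_iff]; lia
    rw [leading_digit, Set.image_singleton, walshMatrix_succ_one,
      Submodule.map₂_span_singleton_eq_map_flip]
    ext M
    simp [eq_comm]
  · intro s_odd
    have leading_digit : Set.Ico (2 ^ (s % 2)) (2 ^ (s % 2 + 1)) = {2, 3} := by
      ext; simp only [s_odd, Set.mem_Ico, Set.mem_insert_iff, Set.mem_singleton_iff]; lia
    rw [leading_digit, Set.image_pair, walshMatrix_succ_two, walshMatrix_succ_three,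
      Submodule.span_insert, Submodule.map₂_sup_right, Submodule.map₂_span_singleton_eq_map_flip,
      Submodule.map₂_span_singleton_eq_map_flip]
    ext M
    simp [Submodule.mem_sup, eq_comm]
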